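/- Let d ≥ 1, s > 0 and 1 ≤ p ≤ ∞. Define M_t(x) = ∑_{n∈ℤ^d} |n|^s e^{i n·x} e^{−t|n|²} for x ∈ 𝕋^d and t > 0 (the kernel of the composite operator (−Δ)^{s/2} e^{tΔ} on 𝕋^d). Then there exists a constant C > 0 (depending only on d, s and p) such that ‖M_t‖_{L^p(𝕋^d)} ≤ C t^{−s/2 − (d/2)(1 − 1/p)} for all t > 0. -/

import Mathlib

/-!
The `L^p` bound is interpolated between the endpoints: if `‖f‖_∞ ≤ B` and `‖f‖_1 ≤ A` then
`‖f‖_p ≤ A^{1/p} B^{1-1/p}` (`eLpNorm_le_of_sup_of_L1`).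

*Supremum* (`exists_sup_bound`). Summing absolute values, each coefficient satisfies
`|n|^s e^{-t|n|²} ≤ C t^{-s/2} e^{-t/4} e^{-t|n|²/4}`, where the factor `e^{-t/4}` is available because
the frequency `n = 0` does not contribute. The remaining Gaussian sum is the `d`-th power of a
one-dimensional one, which is `O((1 + c)/√c)` at `c = t/4` by Poisson summation; `e^{-t/4}` absorbs
the growth in `t`.

*`L¹`* (`exists_L1_bound`). Put `a = s/2`. For an integer `k > a` the Gamma integral gives
`μ^a e^{-μ} = Γ(k-a)⁻¹ ∫_0^∞ σ^{k-a-1} μ^k e^{-(1+σ)μ} dσ`, and Cauchy's formula on a circle of radius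
`(1+σ)/2` around `1+σ` writes `μ^k e^{-(1+σ)μ}` as an average of exponentials `e^{-ζμ}` with
`ζ = (1+σ)(1+e^{iθ}/2)`. Hence `μ^a e^{-μ} = ∫ W(σ,θ) e^{-ζ(σ,θ)μ}` with `W` integrable
(`exists_subordination`). Taking `μ = t|n|²` and summing over `n`, the kernel is `t^{-s/2}` times a
`W`-superposition of heat kernels at the complex times `tζ`, all in the sector `|z| ≤ 3 Re z`.
There the heat kernel is a product of one-dimensional theta series; by the functional equation of
the theta function each of them is dominated by a periodized Gaussian, whose integral over a period
is at most `2π (|z|/Re z)^{1/2} ≤ 2π√3` (`enorm_theta_le`, `lintegral_thetaMajorant_le`). So the `L¹`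
norms of these heat kernels are bounded uniformly in `t`.
-/

open MeasureTheory
open scoped ENNReal

/-- The kernel `M_t` of the composite operator `(-Δ)^{s/2} e^{tΔ}` on the torus
`𝕋^d`, viewed as a `2π`-periodic function on `ℝ^d`:
`M_t(x) = ∑_{n ∈ ℤ^d} |n|^s e^{i n·x} e^{-t|n|²}`. -/
noncomputable def fracHeatKernel (d : ℕ) (s t : ℝ) (x : Fin d → ℝ) : ℂ :=
  ∑' n : Fin d → ℤ,
    ((Real.sqrt (∑ i, ((n i : ℝ)) ^ 2)) ^ s : ℝ) *
      Complex.exp (Complex.I * ((∑ i, (n i : ℝ) * x i : ℝ) : ℂ)) *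
      ((Real.exp (-t * ∑ i, ((n i : ℝ)) ^ 2) : ℝ) : ℂ)

/-- Lebesgue measure restricted to a fundamental domain of `𝕋^d`. -/
noncomputable def torusMeasure (d : ℕ) : Measure (Fin d → ℝ) :=
  volume.restrict (Set.pi Set.univ fun _ => Set.Ioc 0 (2 * Real.pi))

/-! ### Products over coordinates and periodization -/

lemma summable_tsum_pi_prod {𝕜 : Type*} [NormedField 𝕜] [CompleteSpace 𝕜] (d : ℕ)
    (f : Fin d → ℤ → 𝕜) (hf : ∀ i, Summable fun m => ‖f i m‖) :
    (Summable fun n : Fin d → ℤ => ‖∏ i, f i (n i)‖) ∧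
      ∑' n : Fin d → ℤ, ∏ i, f i (n i) = ∏ i, ∑' m, f i m := by
  induction d with
  | zero => exact ⟨Summable.of_finite, by simp⟩
  | succ d ih =>
    obtain ⟨h1, h2⟩ := ih (fun i => f i.succ) (fun i => hf i.succ)
    let e : ℤ × (Fin d → ℤ) ≃ (Fin (d + 1) → ℤ) := Fin.consEquiv (fun _ => ℤ)
    have he : ∀ q : ℤ × (Fin d → ℤ), ∏ i, f i (e q i) = f 0 q.1 * ∏ i, f (Fin.succ i) (q.2 i) := by
      intro q
      simp [e, Fin.prod_univ_succ, Fin.consEquiv]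
    constructor
    · rw [← e.summable_iff]
      have := Summable.mul_norm (hf 0) h1
      exact this.congr fun q => by simp only [Function.comp, he q]
    · rw [← e.tsum_eq, Fin.prod_univ_succ, ← h2, tsum_mul_tsum_of_summable_norm (hf 0) h1]
      exact tsum_congr he

lemma lintegral_pi_prod (d : ℕ) (μ : Measure ℝ) [SigmaFinite μ] (f : ℝ → ℝ≥0∞) (hf : Measurable f) :
    ∫⁻ x : Fin d → ℝ, ∏ i, f (x i) ∂(Measure.pi fun _ => μ) = (∫⁻ v, f v ∂μ) ^ d := by
  induction d with
  | zero => simp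
  | succ d ih =>
    rw [← ((measurePreserving_piFinSuccAbove (fun _ : Fin (d + 1) => μ) 0).symm).lintegral_comp
      (by fun_prop)]
    have : ∀ q : ℝ × (Fin d → ℝ),
        ∏ i, f ((MeasurableEquiv.piFinSuccAbove (fun _ : Fin (d + 1) => ℝ) 0).symm q i)
          = f q.1 * ∏ i, f (q.2 i) := by
      intro q
      simp [Fin.prod_univ_succ, MeasurableEquiv.piFinSuccAbove_symm_apply, Fin.insertNthEquiv]
    simp_rw [this]
    rw [lintegral_prod_mul (f := f) (g := fun y : Fin d → ℝ => ∏ i, f (y i)) hf.aemeasurable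
      (Finset.measurable_fun_prod _ fun i _ => hf.comp (measurable_pi_apply i)).aemeasurable, ih, pow_succ']

/-- Unfolding: the integral over one period of the `2π`-periodization is the integral over `ℝ`. -/
lemma lintegral_periodization (g : ℝ → ℝ≥0∞) (hg : Measurable g) :
    ∫⁻ v in Set.Ioc 0 (2 * Real.pi), ∑' n : ℤ, g (v - 2 * Real.pi * n) = ∫⁻ v, g v := by
  rw [lintegral_tsum (fun n => by fun_prop)]
  have h2 : (0 : ℝ) < 2 * Real.pi := Real.two_pi_pos
  rw [← setLIntegral_univ g, ← iUnion_Ioc_add_zsmul h2 0,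
    lintegral_iUnion (fun i => measurableSet_Ioc) (Set.pairwise_disjoint_Ioc_add_zsmul 0 (2 * Real.pi)),
    ← (Equiv.neg ℤ).tsum_eq]
  refine tsum_congr fun n => ?_
  have := (measurePreserving_add_right volume (2 * Real.pi * (n : ℝ))).setLIntegral_comp_emb
    (MeasurableEquiv.addRight _).measurableEmbedding g (Set.Ioc 0 (2 * Real.pi))
  rw [Set.image_add_const_Ioc] at this
  have e1 : 0 + n • (2 * Real.pi) = 0 + 2 * Real.pi * n := by simp; ring
  have e2 : 0 + (n + 1) • (2 * Real.pi) = 2 * Real.pi + 2 * Real.pi * n := by simp; ring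
  rw [e1, e2, ← this]
  simp

/-! ### Theta series at complex time -/

/-- The majorant of the one-dimensional theta series at complex time `z`: the periodization
of the modulus of the Gaussian `(π/z)^{1/2} exp(-v²/(4z))`. -/
noncomputable def thetaMajorant (z : ℂ) (v : ℝ) : ℝ≥0∞ :=
  ENNReal.ofReal (√(Real.pi / ‖z‖)) *
    ∑' n : ℤ, ENNReal.ofReal (Real.exp (-(z⁻¹.re / 4) * (v - 2 * Real.pi * n) ^ 2))

lemma measurable_thetaMajorant : Measurable (fun q : ℂ × ℝ => thetaMajorant q.1 q.2) := by
  unfold thetaMajorant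
  refine Measurable.mul (by fun_prop) (Measurable.tsum fun n => ?_)
  refine ENNReal.measurable_ofReal.comp (Real.measurable_exp.comp ?_)
  have : Measurable fun q : ℂ × ℝ => q.1⁻¹.re := Complex.measurable_re.comp (measurable_fst.inv)
  fun_prop

lemma measurable_thetaMajorant_right (z : ℂ) : Measurable (thetaMajorant z) :=
  measurable_thetaMajorant.comp (measurable_const.prodMk measurable_id : Measurable fun v : ℝ => (z, v))

lemma inv_re_pos {z : ℂ} (hz : 0 < z.re) : 0 < z⁻¹.re := by
  rw [Complex.inv_re]
  exact div_pos hz (Complex.normSq_pos.2 (by rintro rfl; simp at hz))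

/-- The constant is `2π √(|z| / Re z)` at its largest in the sector `|z| ≤ 3 Re z`. -/
lemma lintegral_thetaMajorant_le {z : ℂ} (hz : 0 < z.re) (h3 : ‖z‖ ≤ 3 * z.re) :
    ∫⁻ v in Set.Ioc 0 (2 * Real.pi), thetaMajorant z v ≤ ENNReal.ofReal (2 * Real.pi * √3) := by
  have hpos := inv_re_pos hz
  unfold thetaMajorant
  rw [lintegral_const_mul _ (by fun_prop),
    lintegral_periodization (fun v => ENNReal.ofReal (Real.exp (-(z⁻¹.re / 4) * v ^ 2))) (by fun_prop),
    ← ofReal_integral_eq_lintegral_ofReal (integrable_exp_neg_mul_sq (by positivity))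
      (Filter.Eventually.of_forall fun v => (Real.exp_pos _).le), integral_gaussian,
    ← ENNReal.ofReal_mul (by positivity), ← Real.sqrt_mul (by positivity)]
  apply ENNReal.ofReal_le_ofReal
  have hn : 0 < ‖z‖ := norm_pos_iff.2 (by rintro rfl; simp at hz)
  apply Real.sqrt_le_iff.2 ⟨by positivity, ?_⟩
  rw [mul_pow, Real.sq_sqrt (by norm_num), Complex.inv_re, Complex.normSq_eq_norm_sq]
  have : Real.pi / ‖z‖ * (Real.pi / (z.re / ‖z‖ ^ 2 / 4)) = (2 * Real.pi) ^ 2 * (‖z‖ / z.re) := by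
    field_simp; norm_num
  rw [this]
  gcongr
  rwa [div_le_iff₀ hz]

lemma summable_theta {z : ℂ} (hz : 0 < z.re) (v : ℝ) :
    Summable fun m : ℤ => ‖Complex.exp (Complex.I * ((m * v : ℝ) : ℂ)) * Complex.exp (-z * m ^ 2)‖ := by
  have h := (summable_jacobiTheta₂_term_iff (v / (2 * Real.pi)) (Complex.I * z / Real.pi)).2 (by
    have : Complex.I * z / Real.pi = ((1 / Real.pi : ℝ) : ℂ) * (Complex.I * z) := by
      push_cast; ring
    rw [this, Complex.im_ofReal_mul]
    simp only [Complex.I_mul_im]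
    have := Real.pi_pos
    positivity)
  refine h.norm.congr fun m => ?_
  rw [jacobiTheta₂_term, ← Complex.exp_add]
  congr 2
  have := Complex.ofReal_ne_zero.2 Real.pi_ne_zero
  push_cast
  field_simp
  ring_nf
  simp [Complex.I_sq, sub_eq_add_neg]

/-- By the functional equation of the theta function (Poisson summation), the theta series is
bounded by the periodized Gaussian modulus. -/
lemma enorm_theta_le {z : ℂ} (hz : 0 < z.re) (v : ℝ) :
    ‖∑' m : ℤ, Complex.exp (Complex.I * ((m * v : ℝ) : ℂ)) * Complex.exp (-z * m ^ 2)‖ₑ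
      ≤ thetaMajorant z v := by
  have hpi := Complex.ofReal_ne_zero.2 Real.pi_ne_zero
  have hz0 : z ≠ 0 := by rintro rfl; simp at hz
  have e1 : ∑' m : ℤ, Complex.exp (Complex.I * ((m * v : ℝ) : ℂ)) * Complex.exp (-z * m ^ 2)
      = jacobiTheta₂ (v / (2 * Real.pi)) (Complex.I * z / Real.pi) := by
    unfold jacobiTheta₂
    refine tsum_congr fun m => ?_
    rw [jacobiTheta₂_term, ← Complex.exp_add]
    congr 1
    push_cast
    field_simp
    ring_nf
    simp [Complex.I_sq, sub_eq_add_neg]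
  rw [e1, jacobiTheta₂_functional_equation, mul_assoc, jacobiTheta₂, ← tsum_mul_left, enorm_mul]
  unfold thetaMajorant
  have e2 : ‖1 / (-Complex.I * (Complex.I * z / Real.pi)) ^ (1 / 2 : ℂ)‖ₑ
      = ENNReal.ofReal (√(Real.pi / ‖z‖)) := by
    rw [← ofReal_norm]
    congr 1
    have : -Complex.I * (Complex.I * z / Real.pi) = z / Real.pi := by
      field_simp; simp [Complex.I_sq]
    rw [this, norm_div, norm_one]
    have h12 : (1 / 2 : ℂ) = ((1 / 2 : ℝ) : ℂ) := by push_cast; rfl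
    rw [h12, Complex.norm_cpow_of_ne_zero (by simp [hz0, hpi]), Complex.ofReal_im, mul_zero,
      Real.exp_zero, div_one, Complex.ofReal_re, ← Real.sqrt_eq_rpow, norm_div,
      Complex.norm_of_nonneg Real.pi_pos.le, one_div, ← Real.sqrt_inv, inv_div]
  rw [e2]
  gcongr
  refine (enorm_tsum_le_tsum_enorm).trans (le_of_eq (tsum_congr fun n => ?_))
  rw [jacobiTheta₂_term, ← Complex.exp_add, ← ofReal_norm, Complex.norm_exp]
  congr 2
  have : -Real.pi * Complex.I * (v / (2 * Real.pi)) ^ 2 / (Complex.I * z / Real.pi) +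
      (2 * Real.pi * Complex.I * n * (v / (2 * Real.pi) / (Complex.I * z / Real.pi)) +
        Real.pi * Complex.I * n ^ 2 * (-1 / (Complex.I * z / Real.pi)))
      = ((-((v - 2 * Real.pi * n) ^ 2 / 4) : ℝ) : ℂ) * z⁻¹ := by
    push_cast
    field_simp
    ring
  rw [this, Complex.re_ofReal_mul]
  ring

/-! ### Subordination to exponentials in a sector -/

/-- The angular average that extracts the `k`-th power: Cauchy's formula on the unit circle. -/
lemma integral_angle (k : ℕ) (u : ℝ) :
    ∫ θ in Set.Ioc 0 (2 * Real.pi), Complex.exp (-(k * θ * Complex.I)) *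
        Complex.exp (-(u * (1 + Complex.exp (θ * Complex.I) / 2)))
      = 2 * Real.pi / k.factorial * (-u / 2) ^ k * Complex.exp (-u) := by
  have hd : DifferentiableOn ℂ (fun z : ℂ => Complex.exp ((-u / 2) * z)) (Metric.closedBall 0 1) := by
    fun_prop
  have h := hd.circleIntegral_one_div_sub_center_pow_smul one_pos k
  rw [circleIntegral, intervalIntegral.integral_of_le Real.two_pi_pos.le] at h
  have hit : iteratedDeriv k (fun z : ℂ => Complex.exp ((-u / 2) * z)) 0 = (-u / 2) ^ k := by
    simp [iteratedDeriv_cexp_const_mul]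
  rw [hit] at h
  have e : ∀ θ : ℝ, Complex.exp (-(k * θ * Complex.I)) *
        Complex.exp (-(u * (1 + Complex.exp (θ * Complex.I) / 2)))
      = (Complex.exp (-u) / Complex.I) * (deriv (circleMap 0 1) θ • (1 / (circleMap 0 1 θ - 0) ^ (k + 1)) •
        Complex.exp ((-u / 2) * circleMap 0 1 θ)) := by
    intro θ
    have e1 : Complex.exp (-(k * θ * Complex.I)) = (Complex.exp (θ * Complex.I) ^ k)⁻¹ := by
      rw [← Complex.exp_nat_mul, ← Complex.exp_neg]; ring_nf
    have e2 : Complex.exp (-(u * (1 + Complex.exp (θ * Complex.I) / 2)))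
        = Complex.exp (-u) * Complex.exp ((-u / 2) * Complex.exp (θ * Complex.I)) := by
      rw [← Complex.exp_add]; ring_nf
    have h0 := Complex.exp_ne_zero (θ * Complex.I)
    rw [e1, e2]
    simp only [deriv_circleMap, circleMap, zero_add, Complex.ofReal_one, one_mul, sub_zero,
      smul_eq_mul]
    field_simp
    ring
  simp_rw [e]
  rw [integral_const_mul, h]
  simp only [smul_eq_mul]
  field_simp

/-- The density behaves like `σ^{k-a-1}` near `0` and like `σ^{-a-1}` at infinity. -/
lemma integrable_weight {a : ℝ} (ha : 0 < a) {k : ℕ} (hk : a < k) :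
    IntegrableOn (fun σ : ℝ => σ ^ (k - a - 1) * ((1 + |σ|) ^ k)⁻¹) (Set.Ioi 0) := by
  have hm : Measurable (fun σ : ℝ => σ ^ (k - a - 1) * ((1 + |σ|) ^ k)⁻¹) := by fun_prop
  rw [← Set.Ioc_union_Ioi_eq_Ioi zero_le_one]
  refine IntegrableOn.union ?_ ?_
  · have h : IntegrableOn (fun σ : ℝ => σ ^ (k - a - 1)) (Set.Ioc 0 1) := by
      rw [← intervalIntegrable_iff_integrableOn_Ioc_of_le zero_le_one]
      exact intervalIntegral.intervalIntegrable_rpow' (by linarith)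
    refine Integrable.mono' h hm.aestronglyMeasurable ?_
    filter_upwards [ae_restrict_mem measurableSet_Ioc] with σ hσ
    have h0 : 0 ≤ σ ^ (k - a - 1) := Real.rpow_nonneg hσ.1.le _
    rw [Real.norm_of_nonneg (by positivity)]
    refine mul_le_of_le_one_right h0 (inv_le_one_of_one_le₀ (one_le_pow₀ ?_))
    linarith [abs_nonneg σ]
  · have h : IntegrableOn (fun σ : ℝ => σ ^ (-a - 1)) (Set.Ioi 1) :=
      integrableOn_Ioi_rpow_of_lt (by linarith) one_pos
    refine Integrable.mono' h hm.aestronglyMeasurable ?_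
    filter_upwards [ae_restrict_mem measurableSet_Ioi] with σ hσ
    have h1 : 0 < σ := lt_trans one_pos hσ
    rw [Real.norm_of_nonneg (by positivity), abs_of_pos h1,
      show (k : ℝ) - a - 1 = (-a - 1) + k by ring, Real.rpow_add h1, Real.rpow_natCast, mul_assoc]
    refine mul_le_of_le_one_right (by positivity) ?_
    rw [← div_eq_mul_inv]
    refine div_le_one_of_le₀ ?_ (by positivity)
    gcongr
    linarith

/-- Lebesgue measure on the parameter space `(0, ∞) × (0, 2π]` of the subordination formula. -/
noncomputable def subMeasure : Measure (ℝ × ℝ) :=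
  (volume.restrict (Set.Ioi 0)).prod (volume.restrict (Set.Ioc 0 (2 * Real.pi)))

/-- The complex time `(1 + σ)(1 + e^{iθ}/2)`; the absolute value only matters for `σ < 0`, outside
the parameter space, and makes the sector bounds unconditional. -/
noncomputable def subTime (y : ℝ × ℝ) : ℂ :=
  ((1 + |y.1| : ℝ) : ℂ) * (1 + Complex.exp (y.2 * Complex.I) / 2)

lemma measurable_subTime : Measurable subTime := by
  unfold subTime; fun_prop

lemma half_le_subTime_re (y : ℝ × ℝ) : 1 / 2 ≤ (subTime y).re := by
  have h := Real.neg_one_le_cos y.2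
  have : (1 + Complex.exp (y.2 * Complex.I) / 2).re = 1 + Real.cos y.2 / 2 := by
    rw [Complex.add_re, Complex.one_re, Complex.div_ofNat_re, Complex.exp_ofReal_mul_I_re]
  rw [subTime, Complex.re_ofReal_mul, this]
  nlinarith [abs_nonneg y.1]

lemma norm_subTime_le (y : ℝ × ℝ) : ‖subTime y‖ ≤ 3 * (subTime y).re := by
  have h := Real.neg_one_le_cos y.2
  have : (1 + Complex.exp (y.2 * Complex.I) / 2).re = 1 + Real.cos y.2 / 2 := by
    rw [Complex.add_re, Complex.one_re, Complex.div_ofNat_re, Complex.exp_ofReal_mul_I_re]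
  have h2 : ‖1 + Complex.exp (y.2 * Complex.I) / 2‖ ≤ 3 / 2 := by
    refine (norm_add_le _ _).trans ?_
    rw [norm_div, Complex.norm_exp_ofReal_mul_I]
    norm_num
  have h3 : 0 ≤ 1 + |y.1| := by positivity
  rw [subTime, Complex.re_ofReal_mul, this, norm_mul, Complex.norm_of_nonneg h3]
  nlinarith [abs_nonneg y.1]

/-- Subordination: `lam^a e^{-lam}` is a superposition of exponentials `e^{-ζ lam}` with `ζ`
in a sector, against an integrable weight. -/
lemma exists_subordination {a : ℝ} (ha : 0 < a) :
    ∃ W : ℝ × ℝ → ℂ, Integrable W subMeasure ∧ ∀ lam : ℝ, 0 ≤ lam →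
      ((lam ^ a * Real.exp (-lam) : ℝ) : ℂ)
        = ∫ y, W y * Complex.exp (-subTime y * lam) ∂subMeasure := by
  obtain ⟨k, hk⟩ := exists_nat_gt a
  have hk0 : k ≠ 0 := by rintro rfl; norm_num at hk; linarith
  have hb : 0 < (k : ℝ) - a := by linarith
  have hG := Real.Gamma_pos_of_pos hb
  -- `c` cancels the constants of the angular average and of the Gamma integral
  let c : ℂ := k.factorial / (2 * Real.pi * (-1 / 2) ^ k * (Real.Gamma (k - a) : ℝ))
  let W : ℝ × ℝ → ℂ := fun y =>
    (c * ((y.1 ^ (k - a - 1) * ((1 + |y.1|) ^ k)⁻¹ : ℝ) : ℂ)) * Complex.exp (-(k * y.2 * Complex.I))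
  have hW : Integrable W subMeasure := by
    refine Integrable.mul_prod (μ := volume.restrict (Set.Ioi 0))
      (ν := volume.restrict (Set.Ioc 0 (2 * Real.pi)))
      (f := fun σ : ℝ => c * ((σ ^ (k - a - 1) * ((1 + |σ|) ^ k)⁻¹ : ℝ) : ℂ))
      (g := fun θ : ℝ => Complex.exp (-(k * θ * Complex.I))) ?_ ?_
    · exact ((integrable_weight ha hk).ofReal).const_mul c
    · exact (Continuous.integrableOn_Ioc (by fun_prop))
  refine ⟨W, hW, fun lam hlam => ?_⟩
  have hint : Integrable (fun y => W y * Complex.exp (-subTime y * lam)) subMeasure := by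
    refine hW.mul_bdd (c := 1) ?_ ?_
    · have := measurable_subTime
      exact Measurable.aestronglyMeasurable (by fun_prop)
    · refine Filter.Eventually.of_forall fun y => ?_
      rw [Complex.norm_exp, Complex.re_mul_ofReal, Complex.neg_re]
      have := half_le_subTime_re y
      exact Real.exp_le_one_iff.2 (by nlinarith)
  unfold subMeasure at hint ⊢
  rw [integral_prod _ hint]
  have hinner : ∀ σ ∈ Set.Ioi (0 : ℝ), ∫ θ in Set.Ioc 0 (2 * Real.pi),
      W (σ, θ) * Complex.exp (-subTime (σ, θ) * lam)
      = (((Real.Gamma (k - a))⁻¹ * lam ^ k * Real.exp (-lam) *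
          (σ ^ (k - a - 1) * Real.exp (-(lam * σ))) : ℝ) : ℂ) := by
    intro σ hσ
    have hσ' : (0 : ℝ) < σ := hσ
    have e : ∀ θ : ℝ, W (σ, θ) * Complex.exp (-subTime (σ, θ) * lam)
        = (c * ((σ ^ (k - a - 1) * ((1 + σ) ^ k)⁻¹ : ℝ) : ℂ)) *
          (Complex.exp (-(k * θ * Complex.I)) *
        Complex.exp (-(((1 + σ) * lam : ℝ) * (1 + Complex.exp (θ * Complex.I) / 2)))) := by
      intro θ
      simp only [W, subTime, abs_of_pos hσ']
      rw [mul_assoc]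
      congr 3
      push_cast
      ring
    simp_rw [e]
    rw [integral_const_mul, integral_angle]
    have hG' : ((Real.Gamma (k - a) : ℝ) : ℂ) ≠ 0 := Complex.ofReal_ne_zero.2 hG.ne'
    have hpi := Complex.ofReal_ne_zero.2 Real.pi_ne_zero
    have h1σ : (1 + σ : ℂ) ≠ 0 := by
      have : (1 + σ : ℝ) ≠ 0 := by positivity
      exact_mod_cast this
    have hf : (k.factorial : ℂ) ≠ 0 := by exact_mod_cast k.factorial_ne_zero
    have e3 : (-(((1 + σ) * lam : ℝ) : ℂ) / 2) ^ k = (-1 / 2) ^ k * (1 + σ) ^ k * lam ^ k := by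
      rw [← mul_pow, ← mul_pow]; push_cast; ring_nf
    have e4 : Complex.exp (-(((1 + σ) * lam : ℝ) : ℂ))
        = Complex.exp (-lam) * Complex.exp (-(lam * σ)) := by
      rw [← Complex.exp_add]; push_cast; ring_nf
    have h12 : ((-1 / 2 : ℂ)) ^ k ≠ 0 := pow_ne_zero _ (by norm_num)
    rw [e3, e4]
    simp only [c]
    push_cast
    generalize ((-1 / 2 : ℂ)) ^ k = A at *
    field_simp
  rw [setIntegral_congr_fun measurableSet_Ioi hinner, integral_complex_ofReal, integral_const_mul]
  congr 1
  rcases hlam.eq_or_lt with rfl | hpos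
  -- at `lam = 0` both sides vanish, since `k ≠ 0` and `a > 0`
  · simp [hk0, Real.zero_rpow ha.ne']
  · have := Real.integral_rpow_mul_exp_neg_mul_Ioi hb hpos
    rw [this, Real.div_rpow zero_le_one hpos.le, Real.one_rpow, Real.rpow_sub hpos,
      Real.rpow_natCast]
    have h1 : lam ^ a ≠ 0 := (Real.rpow_pos_of_pos hpos a).ne'
    field_simp

/-! ### The `L¹` bound -/

lemma exp_mul_exp_eq_prod {d : ℕ} (z : ℂ) (x : Fin d → ℝ) (n : Fin d → ℤ) :
    Complex.exp (Complex.I * ((∑ i, (n i : ℝ) * x i : ℝ) : ℂ)) *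
        Complex.exp (-z * ((∑ i, (n i : ℝ) ^ 2 : ℝ) : ℂ))
      = ∏ i, (Complex.exp (Complex.I * ((n i * x i : ℝ) : ℂ)) *
          Complex.exp (-z * (n i) ^ 2)) := by
  rw [Finset.prod_mul_distrib, ← Complex.exp_sum, ← Complex.exp_sum]
  push_cast
  rw [Finset.mul_sum, Finset.mul_sum]

lemma summable_gauss (d : ℕ) {c : ℝ} (hc : 0 < c) :
    Summable fun n : Fin d → ℤ => Real.exp (-c * ∑ i, (n i : ℝ) ^ 2) := by
  have h := (summable_tsum_pi_prod d _ (fun _ : Fin d => summable_theta (z := c) (by simpa) 0)).1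
  refine h.congr fun n => ?_
  have := exp_mul_exp_eq_prod (d := d) c 0 n
  simp only [Pi.zero_apply] at this
  rw [← this, norm_mul, mul_comm Complex.I, Complex.norm_exp_ofReal_mul_I, one_mul,
    Complex.norm_exp]
  congr 1
  rw [Complex.re_mul_ofReal]
  simp

/-- The heat kernel at complex time is dominated by a product of one-dimensional majorants. -/
lemma enorm_heat_le {d : ℕ} {z : ℂ} (hz : 0 < z.re) (x : Fin d → ℝ) :
    ‖∑' n : Fin d → ℤ, Complex.exp (Complex.I * ((∑ i, (n i : ℝ) * x i : ℝ) : ℂ)) *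
        Complex.exp (-z * ((∑ i, (n i : ℝ) ^ 2 : ℝ) : ℂ))‖ₑ ≤ ∏ i, thetaMajorant z (x i) := by
  simp_rw [exp_mul_exp_eq_prod]
  rw [(summable_tsum_pi_prod d _ (fun i : Fin d => summable_theta hz (x i))).2]
  rw [← ofReal_norm, norm_prod, ENNReal.ofReal_prod_of_nonneg (fun i _ => norm_nonneg _)]
  refine Finset.prod_le_prod' fun i _ => ?_
  rw [ofReal_norm]
  exact enorm_theta_le hz (x i)

lemma sqrt_rpow_eq (s : ℝ) {q : ℝ} (hq : 0 ≤ q) : √q ^ s = q ^ (s / 2) := by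
  rw [Real.sqrt_eq_rpow, ← Real.rpow_mul hq]; ring_nf

/-- Superposition formula for the kernel, in terms of the heat kernel at complex times. -/
lemma fracHeatKernel_eq_integral (d : ℕ) {s : ℝ} {W : ℝ × ℝ → ℂ}
    (hW : Integrable W subMeasure)
    (hsub : ∀ lam : ℝ, 0 ≤ lam → ((lam ^ (s / 2) * Real.exp (-lam) : ℝ) : ℂ)
        = ∫ y, W y * Complex.exp (-subTime y * lam) ∂subMeasure)
    {t : ℝ} (ht : 0 < t) (x : Fin d → ℝ) :
    fracHeatKernel d s t x = ((t ^ (-(s / 2)) : ℝ) : ℂ) * ∫ y, W y *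
      ∑' n : Fin d → ℤ, Complex.exp (Complex.I * ((∑ i, (n i : ℝ) * x i : ℝ) : ℂ)) *
        Complex.exp (-(t * subTime y) * ((∑ i, (n i : ℝ) ^ 2 : ℝ) : ℂ)) ∂subMeasure := by
  have hmeas := measurable_subTime
  let F : (Fin d → ℤ) → ℝ × ℝ → ℂ := fun n y =>
    W y * (Complex.exp (Complex.I * ((∑ i, (n i : ℝ) * x i : ℝ) : ℂ)) *
        Complex.exp (-(t * subTime y) * ((∑ i, (n i : ℝ) ^ 2 : ℝ) : ℂ)))
  have hbd : ∀ (n : Fin d → ℤ) (y : ℝ × ℝ), ‖Complex.exp (Complex.I * ((∑ i, (n i : ℝ) * x i : ℝ) : ℂ)) *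
        Complex.exp (-(t * subTime y) * ((∑ i, (n i : ℝ) ^ 2 : ℝ) : ℂ))‖
        ≤ Real.exp (-(t / 2) * ∑ i, (n i : ℝ) ^ 2) := by
    intro n y
    rw [norm_mul, mul_comm Complex.I, Complex.norm_exp_ofReal_mul_I, one_mul,
      Complex.norm_exp, Complex.re_mul_ofReal, Complex.neg_re, Complex.re_ofReal_mul]
    apply Real.exp_le_exp.2
    have h1 := half_le_subTime_re y
    have h2 : 0 ≤ ∑ i, (n i : ℝ) ^ 2 := by positivity
    apply mul_le_mul_of_nonneg_right _ h2
    nlinarith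
  have hFint : ∀ n, Integrable (F n) subMeasure := by
    intro n
    refine hW.mul_bdd (c := Real.exp (-(t / 2) * ∑ i, (n i : ℝ) ^ 2)) ?_
      (Filter.Eventually.of_forall (hbd n))
    exact Measurable.aestronglyMeasurable (by fun_prop)
  have hFsum : Summable fun n => ∫ y, ‖F n y‖ ∂subMeasure := by
    refine Summable.of_nonneg_of_le (fun n => integral_nonneg fun y => norm_nonneg _) (fun n => ?_)
      ((summable_gauss d (half_pos ht)).mul_left (∫ y, ‖W y‖ ∂subMeasure))
    rw [← integral_mul_const]
    refine integral_mono (hFint n).norm (hW.norm.mul_const _) fun y => ?_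
    simp only [F]
    rw [norm_mul]
    exact mul_le_mul_of_nonneg_left (hbd n y) (norm_nonneg _)
  have key := integral_tsum_of_summable_integral_norm hFint hFsum
  simp only [F] at key
  simp_rw [tsum_mul_left] at key
  rw [← key, ← tsum_mul_left, fracHeatKernel]
  refine tsum_congr fun n => ?_
  have hq : 0 ≤ ∑ i, (n i : ℝ) ^ 2 := by positivity
  rw [sqrt_rpow_eq s hq]
  have h1 := hsub (t * ∑ i, (n i : ℝ) ^ 2) (by positivity)
  rw [Real.mul_rpow ht.le hq] at h1
  have h2 : ∫ y, W y * (Complex.exp (Complex.I * ((∑ i, (n i : ℝ) * x i : ℝ) : ℂ)) *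
        Complex.exp (-(t * subTime y) * ((∑ i, (n i : ℝ) ^ 2 : ℝ) : ℂ))) ∂subMeasure
      = Complex.exp (Complex.I * ((∑ i, (n i : ℝ) * x i : ℝ) : ℂ)) *
        ((t ^ (s / 2) * (∑ i, (n i : ℝ) ^ 2) ^ (s / 2) *
          Real.exp (-(t * ∑ i, (n i : ℝ) ^ 2)) : ℝ) : ℂ) := by
    rw [h1, ← integral_const_mul]
    refine integral_congr_ae (Filter.Eventually.of_forall fun y => ?_)
    have : -(t * subTime y) * ((∑ i, (n i : ℝ) ^ 2 : ℝ) : ℂ)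
        = -subTime y * ((t * ∑ i, (n i : ℝ) ^ 2 : ℝ) : ℂ) := by
      push_cast; ring
    simp only [this]
    ring
  rw [h2, neg_mul t]
  have h3 : ((t ^ (-(s / 2)) : ℝ) : ℂ) * ((t ^ (s / 2) : ℝ) : ℂ) = 1 := by
    rw [← Complex.ofReal_mul, ← Real.rpow_add ht]; simp
  rw [Complex.ofReal_mul, Complex.ofReal_mul]
  linear_combination (-((((∑ i, (n i : ℝ) ^ 2) ^ (s / 2) : ℝ) : ℂ) *
    Complex.exp (Complex.I * ((∑ i, (n i : ℝ) * x i : ℝ) : ℂ)) *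
    ((Real.exp (-(t * ∑ i, (n i : ℝ) ^ 2)) : ℝ) : ℂ))) * h3

instance : SFinite subMeasure := by unfold subMeasure; infer_instance

lemma torusMeasure_eq_pi (d : ℕ) : torusMeasure d =
    Measure.pi fun _ : Fin d => volume.restrict (Set.Ioc 0 (2 * Real.pi)) := by
  rw [torusMeasure, volume_pi, Measure.restrict_pi_pi]

/-- The time-dependent factor comes only from scaling: the complex-time heat kernels have uniformly
bounded `L¹` norm. -/
lemma exists_L1_bound (d : ℕ) {s : ℝ} (hs : 0 < s) :
    ∃ A : ℝ, 0 < A ∧ ∀ t : ℝ, 0 < t →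
      ∫⁻ x, ‖fracHeatKernel d s t x‖ₑ ∂torusMeasure d ≤ ENNReal.ofReal (A * t ^ (-(s / 2))) := by
  obtain ⟨W, hW, hsub⟩ := exists_subordination (half_pos hs)
  have hmeas := measurable_subTime
  set D : ℝ := 2 * Real.pi * √3
  have hD : 0 ≤ D := by positivity
  have hI : 0 ≤ ∫ y, ‖W y‖ ∂subMeasure := integral_nonneg fun y => norm_nonneg _
  refine ⟨(∫ y, ‖W y‖ ∂subMeasure) * D ^ d + 1, by positivity, fun t ht => ?_⟩
  have htp : 0 < t ^ (-(s / 2)) := Real.rpow_pos_of_pos ht _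
  have hre : ∀ y, 0 < ((t : ℂ) * subTime y).re := fun y => by
    rw [Complex.re_ofReal_mul]
    have := half_le_subTime_re y
    exact mul_pos ht (by linarith)
  have hsec : ∀ y, ‖(t : ℂ) * subTime y‖ ≤ 3 * ((t : ℂ) * subTime y).re := fun y => by
    rw [Complex.re_ofReal_mul, norm_mul, Complex.norm_of_nonneg ht.le]
    nlinarith [norm_subTime_le y]
  have hpt : ∀ x : Fin d → ℝ, ‖fracHeatKernel d s t x‖ₑ ≤ ENNReal.ofReal (t ^ (-(s / 2))) *
      ∫⁻ y, ‖W y‖ₑ * ∏ i, thetaMajorant (t * subTime y) (x i) ∂subMeasure := by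
    intro x
    rw [fracHeatKernel_eq_integral d hW hsub ht x, enorm_mul, ← ofReal_norm,
      Complex.norm_of_nonneg htp.le]
    gcongr
    refine (enorm_integral_le_lintegral_enorm _).trans (lintegral_mono fun y => ?_)
    simp only
    rw [enorm_mul]
    gcongr
    exact enorm_heat_le (hre y) x
  have hjoint : AEMeasurable (Function.uncurry fun (x : Fin d → ℝ) (y : ℝ × ℝ) =>
      ‖W y‖ₑ * ∏ i, thetaMajorant (t * subTime y) (x i)) ((torusMeasure d).prod subMeasure) := by
    refine AEMeasurable.mul (hW.aestronglyMeasurable.enorm.comp_snd) (Measurable.aemeasurable ?_)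
    refine Finset.measurable_fun_prod _ fun i _ => ?_
    exact measurable_thetaMajorant.comp (f := fun q : (Fin d → ℝ) × (ℝ × ℝ) =>
      ((t : ℂ) * subTime q.2, q.1 i)) (by fun_prop)
  have : SFinite (torusMeasure d) := by unfold torusMeasure; infer_instance
  calc ∫⁻ x, ‖fracHeatKernel d s t x‖ₑ ∂torusMeasure d
      ≤ ∫⁻ x, ENNReal.ofReal (t ^ (-(s / 2))) *
          ∫⁻ y, ‖W y‖ₑ * ∏ i, thetaMajorant (t * subTime y) (x i) ∂subMeasure ∂torusMeasure d :=
        lintegral_mono hpt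
    _ = ENNReal.ofReal (t ^ (-(s / 2))) * ∫⁻ y, ∫⁻ x,
          ‖W y‖ₑ * ∏ i, thetaMajorant (t * subTime y) (x i) ∂torusMeasure d ∂subMeasure := by
        rw [lintegral_const_mul' _ _ ENNReal.ofReal_ne_top, lintegral_lintegral_swap hjoint]
    _ ≤ ENNReal.ofReal (t ^ (-(s / 2))) * ∫⁻ y, ‖W y‖ₑ * ENNReal.ofReal D ^ d ∂subMeasure := by
        gcongr with y
        rw [lintegral_const_mul' _ _ enorm_ne_top, torusMeasure_eq_pi,
          lintegral_pi_prod d _ (thetaMajorant (t * subTime y))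
            (measurable_thetaMajorant_right _)]
        gcongr
        exact lintegral_thetaMajorant_le (hre y) (hsec y)
    _ = ENNReal.ofReal ((∫ y, ‖W y‖ ∂subMeasure) * D ^ d * t ^ (-(s / 2))) := by
        rw [lintegral_mul_const' _ _ (ENNReal.pow_ne_top ENNReal.ofReal_ne_top), ← ofReal_integral_norm_eq_lintegral_enorm hW,
          ← ENNReal.ofReal_pow hD, ← ENNReal.ofReal_mul hI, ← ENNReal.ofReal_mul htp.le, mul_comm]
    _ ≤ _ := by
        apply ENNReal.ofReal_le_ofReal
        exact mul_le_mul_of_nonneg_right (le_add_of_nonneg_right zero_le_one) htp.le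

/-! ### The supremum bound -/

lemma summable_gauss_int {c : ℝ} (hc : 0 < c) :
    Summable fun m : ℤ => Real.exp (-c * (m : ℝ) ^ 2) := by
  refine (summable_theta (z := c) (by simpa) 0).congr fun m => ?_
  rw [norm_mul, mul_comm Complex.I, Complex.norm_exp_ofReal_mul_I, one_mul, Complex.norm_exp]
  congr 1
  rw [← Complex.ofReal_intCast, ← Complex.ofReal_pow, Complex.re_mul_ofReal]
  simp

/-- For `c ≥ 1` the sum is decreasing in `c`; for `c ≤ 1` Poisson summation turns it into
`√(π/c)` times the sum with `c` replaced by `π²/c ≥ 1`. -/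
lemma exists_gauss_sum_bound :
    ∃ A : ℝ, 0 < A ∧ ∀ c : ℝ, 0 < c →
      ∑' m : ℤ, Real.exp (-c * (m : ℝ) ^ 2) ≤ A * ((1 + c) / √c) := by
  have hpi := Real.pi_pos
  set S : ℝ := ∑' m : ℤ, Real.exp (-1 * (m : ℝ) ^ 2) with hS
  have hmono : ∀ c : ℝ, 1 ≤ c → ∑' m : ℤ, Real.exp (-c * (m : ℝ) ^ 2) ≤ S := fun c hc => by
    refine (summable_gauss_int (by linarith)).tsum_le_tsum (fun m => ?_) (summable_gauss_int one_pos)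
    apply Real.exp_le_exp.2
    nlinarith [sq_nonneg (m : ℝ)]
  have hS0 : 0 ≤ S := tsum_nonneg fun m => (Real.exp_pos _).le
  refine ⟨√Real.pi * S + S + 1, by positivity, fun c hc => ?_⟩
  have hsc : 0 < √c := Real.sqrt_pos.2 hc
  have hsq : √c ^ 2 = c := Real.sq_sqrt hc.le
  rcases le_total 1 c with h | h
  · refine (hmono c h).trans ?_
    have h1 : 1 ≤ (1 + c) / √c := by
      rw [le_div_iff₀ hsc]; nlinarith
    have : 0 ≤ √Real.pi * S := by positivity
    nlinarith
  · have hp := Real.tsum_exp_neg_mul_int_sq (a := c / Real.pi) (by positivity)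
    have e1 : -Real.pi * (c / Real.pi) = -c := by field_simp
    have e2 : -Real.pi / (c / Real.pi) = -(Real.pi ^ 2 / c) := by field_simp
    rw [e1, e2, ← Real.sqrt_eq_rpow, Real.sqrt_div hc.le, one_div_div] at hp
    rw [hp]
    have h2 : 1 ≤ Real.pi ^ 2 / c := by
      rw [le_div_iff₀ hc]; nlinarith [Real.pi_gt_three]
    calc √Real.pi / √c * ∑' m : ℤ, Real.exp (-(Real.pi ^ 2 / c) * (m : ℝ) ^ 2)
        ≤ √Real.pi / √c * S := by gcongr; exact hmono _ h2
      _ = (√Real.pi * S) * (1 / √c) := by ring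
      _ ≤ _ := by
        gcongr
        · linarith
        · linarith

lemma tsum_gauss_eq (d : ℕ) {c : ℝ} (hc : 0 < c) :
    ∑' n : Fin d → ℤ, Real.exp (-c * ∑ i, (n i : ℝ) ^ 2)
      = (∑' m : ℤ, Real.exp (-c * (m : ℝ) ^ 2)) ^ d := by
  have := (summable_tsum_pi_prod (𝕜 := ℝ) d (fun _ m => Real.exp (-c * (m : ℝ) ^ 2))
    (fun i => (summable_gauss_int hc).norm)).2
  rw [Finset.prod_const, Finset.card_univ, Fintype.card_fin] at this
  rw [← this]
  refine tsum_congr fun n => ?_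
  rw [← Real.exp_sum, Finset.mul_sum]

/-- Each coefficient gains a factor `e^{-t/4}` because the frequency `n = 0` does not contribute. -/
lemma coeff_le {d : ℕ} {a : ℝ} (ha : 0 < a) {t : ℝ} (ht : 0 < t) (n : Fin d → ℤ) :
    (∑ i, (n i : ℝ) ^ 2) ^ a * Real.exp (-t * ∑ i, (n i : ℝ) ^ 2)
      ≤ (2 * a) ^ a * t ^ (-a) * Real.exp (-(t / 4)) *
        Real.exp (-(t / 4) * ∑ i, (n i : ℝ) ^ 2) := by
  have hq : 0 ≤ ∑ i, (n i : ℝ) ^ 2 := by positivity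
  have hint : ∑ i, (n i : ℝ) ^ 2 = ((∑ i, n i ^ 2 : ℤ) : ℝ) := by push_cast; rfl
  have hcase : ∑ i, (n i : ℝ) ^ 2 = 0 ∨ 1 ≤ ∑ i, (n i : ℝ) ^ 2 := by
    rw [hint] at hq ⊢
    have h0 : 0 ≤ ∑ i, n i ^ 2 := by exact_mod_cast hq
    rcases h0.eq_or_lt with h | h
    · left; rw [← h]; simp
    · right; exact_mod_cast h
  generalize ∑ i, (n i : ℝ) ^ 2 = q at *
  rcases hcase with rfl | h1
  · rw [Real.zero_rpow ha.ne', zero_mul]; positivity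
  · have hy : 0 < t * q := by positivity
    -- `y ≤ 2a e^{y/(2a)}`, raised to the power `a`
    have h2 : (t * q) ^ a ≤ (2 * a) ^ a * Real.exp (t * q / 2) := by
      have h3 : t * q ≤ 2 * a * Real.exp (t * q / (2 * a)) := by
        have := Real.add_one_le_exp (t * q / (2 * a))
        have h4 : t * q = 2 * a * (t * q / (2 * a)) := by field_simp
        calc t * q = 2 * a * (t * q / (2 * a)) := h4
          _ ≤ _ := by gcongr; linarith
      calc (t * q) ^ a ≤ (2 * a * Real.exp (t * q / (2 * a))) ^ a := by gcongr
        _ = _ := by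
          rw [Real.mul_rpow (by positivity) (by positivity), ← Real.exp_mul]
          congr 2; field_simp
    have h5 : q ^ a = t ^ (-a) * (t * q) ^ a := by
      rw [Real.mul_rpow ht.le (by positivity), ← mul_assoc, ← Real.rpow_add ht]; simp
    have h6 : Real.exp (t * q / 2) * Real.exp (-t * q)
        ≤ Real.exp (-(t / 4)) * Real.exp (-(t / 4) * q) := by
      rw [← Real.exp_add, ← Real.exp_add]
      apply Real.exp_le_exp.2
      nlinarith
    have h7 : 0 < t ^ (-a) := Real.rpow_pos_of_pos ht _
    calc q ^ a * Real.exp (-t * q) = t ^ (-a) * (t * q) ^ a * Real.exp (-t * q) := by rw [h5]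
      _ ≤ t ^ (-a) * ((2 * a) ^ a * Real.exp (t * q / 2)) * Real.exp (-t * q) := by gcongr
      _ = (2 * a) ^ a * t ^ (-a) * (Real.exp (t * q / 2) * Real.exp (-t * q)) := by ring
      _ ≤ (2 * a) ^ a * t ^ (-a) * (Real.exp (-(t / 4)) * Real.exp (-(t / 4) * q)) := by gcongr
      _ = _ := by ring

lemma exists_sup_bound (d : ℕ) (hd : 1 ≤ d) {s : ℝ} (hs : 0 < s) :
    ∃ B : ℝ, 0 < B ∧ ∀ t : ℝ, 0 < t → ∀ x,
      ‖fracHeatKernel d s t x‖ ≤ B * t ^ (-(s / 2) - (d : ℝ) / 2) := by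
  obtain ⟨A, hA, hAb⟩ := exists_gauss_sum_bound
  have ha := half_pos hs
  set a := s / 2 with ha'
  have hd0 : (0 : ℝ) < d := by exact_mod_cast hd
  refine ⟨(2 * a) ^ a * (2 * A * d) ^ d, by positivity, fun t ht x => ?_⟩
  set K : ℝ := (2 * a) ^ a * t ^ (-a) * Real.exp (-(t / 4)) with hK
  have hta : 0 < t ^ (-a) := Real.rpow_pos_of_pos ht _
  have hK0 : 0 ≤ K := by positivity
  have ht4 : 0 < t / 4 := by positivity
  have hterm : ∀ n : Fin d → ℤ, ‖((√(∑ i, ((n i : ℝ)) ^ 2) ^ s : ℝ) : ℂ) *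
      Complex.exp (Complex.I * ((∑ i, (n i : ℝ) * x i : ℝ) : ℂ)) *
      ((Real.exp (-t * ∑ i, ((n i : ℝ)) ^ 2) : ℝ) : ℂ)‖
      ≤ K * Real.exp (-(t / 4) * ∑ i, (n i : ℝ) ^ 2) := by
    intro n
    have hq : 0 ≤ ∑ i, (n i : ℝ) ^ 2 := by positivity
    rw [norm_mul, norm_mul, mul_comm Complex.I, Complex.norm_exp_ofReal_mul_I, mul_one,
      Complex.norm_of_nonneg (by positivity), Complex.norm_of_nonneg (by positivity),
      sqrt_rpow_eq s hq]
    exact coeff_le ha ht n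
  have hsum := (summable_gauss d ht4).mul_left K
  have h1 := tsum_of_norm_bounded hsum.hasSum hterm
  rw [tsum_mul_left, tsum_gauss_eq d ht4] at h1
  refine (show ‖fracHeatKernel d s t x‖ ≤ _ from h1).trans ?_
  have hS0 : 0 ≤ ∑' m : ℤ, Real.exp (-(t / 4) * (m : ℝ) ^ 2) :=
    tsum_nonneg fun m => (Real.exp_pos _).le
  -- `1 + c ≤ d e^{c/d}` absorbs the polynomial growth of the Gaussian sum into `e^{-c}`
  have h2 : 1 + t / 4 ≤ d * Real.exp (t / 4 / d) := by
    have h3 := Real.add_one_le_exp (t / 4 / d)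
    have h4 : (1 : ℝ) ≤ d := by exact_mod_cast hd
    calc 1 + t / 4 ≤ d * (t / 4 / d + 1) := by
          rw [mul_add, mul_div_cancel₀ _ hd0.ne']; linarith
      _ ≤ _ := by gcongr
  have h5 : ∑' m : ℤ, Real.exp (-(t / 4) * (m : ℝ) ^ 2)
      ≤ 2 * A * d * Real.exp (t / 4 / d) * t ^ (-(1 / 2) : ℝ) := by
    refine (hAb _ ht4).trans ?_
    have e : √(t / 4) = √t / 2 := by
      rw [Real.sqrt_div ht.le, show (4 : ℝ) = 2 ^ 2 by norm_num, Real.sqrt_sq (by norm_num)]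
    rw [Real.rpow_neg ht.le, ← Real.sqrt_eq_rpow, e]
    calc A * ((1 + t / 4) / (√t / 2)) ≤ A * ((d * Real.exp (t / 4 / d)) / (√t / 2)) := by gcongr
      _ = _ := by field_simp
  calc K * (∑' m : ℤ, Real.exp (-(t / 4) * (m : ℝ) ^ 2)) ^ d
      ≤ K * (2 * A * d * Real.exp (t / 4 / d) * t ^ (-(1 / 2) : ℝ)) ^ d := by gcongr
    _ = (2 * a) ^ a * (2 * A * d) ^ d * t ^ (-a - (d : ℝ) / 2) := by
      rw [mul_pow, mul_pow, ← Real.exp_nat_mul, ← Real.rpow_mul_natCast ht.le,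
        mul_div_cancel₀ _ hd0.ne', sub_eq_add_neg (-a), Real.rpow_add ht, hK,
        show -(1 / 2) * (d : ℝ) = -(d / 2) by ring, Real.exp_neg]
      field_simp

/-! ### Interpolation -/

lemma eLpNorm_le_of_sup_of_L1 {α : Type*} [MeasurableSpace α] {μ : Measure α} {f : α → ℂ}
    {p : ℝ≥0∞} (hp : 1 ≤ p) (hp' : p ≠ ∞) {A B : ℝ} (hA : 0 < A) (hB : 0 < B)
    (h1 : ∫⁻ x, ‖f x‖ₑ ∂μ ≤ ENNReal.ofReal A) (h2 : ∀ x, ‖f x‖ ≤ B) :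
    eLpNorm f p μ ≤ ENNReal.ofReal (A ^ (1 / p.toReal) * B ^ (1 - 1 / p.toReal)) := by
  have hr : 1 ≤ p.toReal := by
    simpa using ENNReal.toReal_mono hp' hp
  have hp0 : p ≠ 0 := (zero_lt_one.trans_le hp).ne'
  rw [eLpNorm_eq_lintegral_rpow_enorm_toReal hp0 hp']
  generalize p.toReal = r at *
  have hr0 : 0 < r := by linarith
  have h3 : ∫⁻ x, ‖f x‖ₑ ^ r ∂μ ≤ ENNReal.ofReal (B ^ (r - 1) * A) := by
    calc ∫⁻ x, ‖f x‖ₑ ^ r ∂μ ≤ ∫⁻ x, ENNReal.ofReal B ^ (r - 1) * ‖f x‖ₑ ∂μ := by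
          refine lintegral_mono fun x => ?_
          have : ‖f x‖ₑ ^ r = ‖f x‖ₑ ^ (r - 1) * ‖f x‖ₑ := by
            conv_rhs => rw [← ENNReal.rpow_one ‖f x‖ₑ, ← ENNReal.rpow_mul, one_mul]
            rw [← ENNReal.rpow_add_of_nonneg _ _ (by linarith) zero_le_one]; simp
          rw [this]
          gcongr
          rw [← ofReal_norm]
          exact ENNReal.ofReal_le_ofReal (h2 x)
      _ = ENNReal.ofReal B ^ (r - 1) * ∫⁻ x, ‖f x‖ₑ ∂μ :=
          lintegral_const_mul' _ _ (ENNReal.rpow_ne_top_of_nonneg (by linarith) ENNReal.ofReal_ne_top)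
      _ ≤ ENNReal.ofReal B ^ (r - 1) * ENNReal.ofReal A := by gcongr
      _ = _ := by
          rw [ENNReal.ofReal_rpow_of_pos hB, ← ENNReal.ofReal_mul (by positivity)]
  refine (ENNReal.rpow_le_rpow h3 (by positivity)).trans (le_of_eq ?_)
  rw [ENNReal.ofReal_rpow_of_pos (by positivity), Real.mul_rpow (by positivity) hA.le,
    ← Real.rpow_mul hB.le, mul_comm]
  congr 3
  field_simp

theorem fracHeatKernel_Lp_bound (d : ℕ) (hd : 1 ≤ d) (s : ℝ) (hs : 0 < s)
    (p : ℝ≥0∞) (hp : 1 ≤ p) :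
    ∃ C : ℝ, 0 < C ∧ ∀ t : ℝ, 0 < t →
      eLpNorm (fracHeatKernel d s t) p (torusMeasure d)
        ≤ ENNReal.ofReal
            (C * t ^ (-s / 2 - (d : ℝ) / 2 * (1 - 1 / p.toReal))) := by
  obtain ⟨A, hA, hL1⟩ := exists_L1_bound d hs
  obtain ⟨B, hB, hsup⟩ := exists_sup_bound d hd hs
  by_cases hp' : p = ∞
  · subst hp'
    refine ⟨B, hB, fun t ht => ?_⟩
    rw [eLpNorm_exponent_top]
    refine eLpNormEssSup_le_of_ae_bound (Filter.Eventually.of_forall fun x => ?_)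
    refine (hsup t ht x).trans (le_of_eq ?_)
    rw [ENNReal.toReal_top]
    ring_nf
  · refine ⟨A ^ (1 / p.toReal) * B ^ (1 - 1 / p.toReal), by positivity, fun t ht => ?_⟩
    have h1 : 0 < t ^ (-(s / 2)) := Real.rpow_pos_of_pos ht _
    have h2 : 0 < t ^ (-(s / 2) - (d : ℝ) / 2) := Real.rpow_pos_of_pos ht _
    refine (eLpNorm_le_of_sup_of_L1 hp hp' (mul_pos hA h1) (mul_pos hB h2) (hL1 t ht)
      (hsup t ht)).trans (le_of_eq ?_)
    rw [Real.mul_rpow hA.le h1.le, Real.mul_rpow hB.le h2.le, mul_mul_mul_comm,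
      ← Real.rpow_mul ht.le, ← Real.rpow_mul ht.le, ← Real.rpow_add ht]
    ring_nf
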